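/- arXiv:2510.11468 — 8 statements merged into one kernel-verified Lean document; each statement's English description precedes it below -/
import Mathlib

section
/- Let M∞ and N∞ be symmetric 4×4 complex matrices and set Q∞(X) = ½·Xᵀ·M∞·X and P∞(X) = ½·Xᵀ·N∞·X. Let U ⊆ ℂ be open and A : U → GL₄(ℂ) be holomorphic with A(λ)ᵀ·(M₀ − λ·M∞)·A(λ) = M₀ for all λ ∈ U. Define Φ(x,y,λ) := A(λ)·(x, y, xy, 1)ᵀ, and on an open set V ⊆ ℂ² × U on which the fourth component Φ₄ is nonvanishing define ψ(x,y,λ) := (Φ₁/Φ₄, Φ₂/Φ₄, Φ₃/Φ₄). Assume ψ is a biholomorphism from V onto an open set W ⊆ ℂ³ (i.e., there is a holomorphic inverse ψ⁻¹ : W → V). Let g : V → V be holomorphic of the form g(x,y,λ) = (g₁(x,y,λ), g₂(x,y,λ), λ), and assume that for all (x,y,λ) ∈ V one has P∞(Φ(x,y,λ)) ≠ 0 and the determinant of the 3×3 complex Jacobian matrix of g at (x,y,λ) equals P∞(Φ(g(x,y,λ))) / P∞(Φ(x,y,λ)). Define ρ : W → ℂ by ρ(x₁,x₂,x₃) :=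 Q∞(x₁,x₂,x₃,1)·P∞(x₁,x₂,x₃,1), and let f := ψ ∘ g ∘ ψ⁻¹ : W → W. Then for every p ∈ W with ρ(p) ≠ 0, the determinant of the 3×3 complex Jacobian matrix of f at p equals ρ(f(p))/ρ(p). -/
/-!
The heart of the matter is a formula for the Jacobian determinant of `ψ`:
`det Dψ(v) = -det A(λ) · ρ(ψ(v)) / P∞(Φ(v))` for `v = (x, y, λ)`.

Write `S = (x, y, xy, 1)`, so that `Φ = A S`. Passing from homogeneous to affine coordinates gives
`Φ₄⁴ · det Dψ = det (∂ₓΦ, ∂_yΦ, ∂_λΦ, Φ)` (`det_affine`), and the columns on the right are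
`A Sₓ, A S_y, A Z, A S` with `Z = A⁻¹ A' S`. Hence the determinant is
`det A · det (Sₓ, S_y, Z, S) = -det A · Zᵀ M₀ S` (`det_tangent`): the vectors `Sₓ, S_y, S` span the
tangent space at `S` to the cone `Q₀ = 0`. Differentiating `Φᵀ (M₀ - λ M∞) Φ = Sᵀ M₀ S` in `λ`
gives `Zᵀ M₀ S = Φ'ᵀ (M₀ - λ M∞) Φ = ½ Φᵀ M∞ Φ = Q∞(Φ)` (`pencil_deriv`), where `Φ' = A' S`, so
that `Φ₄⁴ · det Dψ = -det A · Q∞(Φ)` (`det_jac_psi`). Since `Q∞` and `P∞` are homogeneous of degree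
two, `Q∞(Φ) P∞(Φ) = Φ₄⁴ ρ(ψ)`, which yields the formula.

The theorem follows from the chain rule applied to `f ∘ ψ = ψ ∘ g`: the factors `det A(λ)` cancel
because `g` preserves `λ`, and the factors `P∞ ∘ Φ` cancel against the Jacobian determinant of `g`.
-/

open Matrix

/-- `M₀` is the symmetric matrix of the quadratic form `Q₀(X) = X₁X₂ - X₃X₄`. -/
def M0 : Matrix (Fin 4) (Fin 4) ℂ := !![0, 1, 0, 0; 1, 0, 0, 0; 0, 0, 0, -1; 0, 0, -1, 0]

/-- The 3×3 complex Jacobian matrix (matrix of partial complex derivatives) of a map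
`f : ℂ³ → ℂ³` at a point `p`. -/
noncomputable def jac3 (f : (Fin 3 → ℂ) → Fin 3 → ℂ) (p : Fin 3 → ℂ) :
    Matrix (Fin 3) (Fin 3) ℂ :=
  Matrix.of fun i j => fderiv ℂ f p (Pi.single j 1) i

theorem jac3_comp {f g : (Fin 3 → ℂ) → Fin 3 → ℂ} {p : Fin 3 → ℂ}
    (hf : DifferentiableAt ℂ f (g p)) (hg : DifferentiableAt ℂ g p) :
    jac3 (f ∘ g) p = jac3 f (g p) * jac3 g p := by
  have key : ∀ (h : (Fin 3 → ℂ) → Fin 3 → ℂ) (q : Fin 3 → ℂ),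
      jac3 h q = LinearMap.toMatrix' (fderiv ℂ h q : (Fin 3 → ℂ) →ₗ[ℂ] Fin 3 → ℂ) := by
    intro h q
    ext i j
    simp [jac3, LinearMap.toMatrix'_apply]
  rw [key, key, key, fderiv_comp p hf hg, ← LinearMap.toMatrix'_comp]
  rfl

/-- The quotient rule matrix of `(F₀/F₃, F₁/F₃, F₂/F₃)`, with `D i j` the `j`-th partial derivative
of `F i`, against the homogeneous determinant of the partial derivatives bordered by `F`. -/
theorem det_affine (F : Fin 4 → ℂ) (D : Fin 4 → Fin 3 → ℂ) (h : F 3 ≠ 0) :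
    (Matrix.of fun i j : Fin 3 =>
      (D i.castSucc j * F 3 - F i.castSucc * D 3 j) / F 3 ^ 2).det * F 3 ^ 4 =
    (Matrix.of fun i : Fin 4 => ![D i 0, D i 1, D i 2, F i]).det := by
  have h1 : ∀ i : Fin 3, i.castSucc = ![(0 : Fin 4), 1, 2] i := by decide
  simp only [h1]
  rw [Matrix.det_fin_three]
  simp [Matrix.det_succ_row_zero, Fin.sum_univ_succ, Fin.succAbove]
  field_simp
  ring

/-- The determinant of the columns `Sₓ, S_y, Z, S` is, up to sign, the bilinear form of `M₀`. -/
theorem det_tangent (x y : ℂ) (Z : Fin 4 → ℂ) :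
    (Matrix.of fun i : Fin 4 =>
      ![![1, 0, y, 0] i, ![0, 1, x, 0] i, Z i, ![x, y, x * y, 1] i]).det =
    -(Z ⬝ᵥ (M0 *ᵥ ![x, y, x * y, 1])) := by
  simp [Matrix.det_succ_row_zero, Fin.sum_univ_succ, Fin.succAbove, M0, dotProduct, mulVec]
  ring

/-- Differentiating the constancy of `l ↦ a(l)ᵀ (M₀ - l M) a(l)` along the pencil. -/
theorem pencil_deriv (M : Matrix (Fin 4) (Fin 4) ℂ) (hM : M.IsSymm) (a : ℂ → Fin 4 → ℂ)
    (a' : Fin 4 → ℂ) (l c : ℂ) (ha : ∀ i, HasDerivAt (fun t => a t i) (a' i) l)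
    (hc : ∀ᶠ t in nhds l, a t ⬝ᵥ ((M0 - t • M) *ᵥ a t) = c) :
    a' ⬝ᵥ ((M0 - l • M) *ᵥ a l) = 1 / 2 * (a l ⬝ᵥ (M *ᵥ a l)) := by
  have h0 : HasDerivAt (fun t => a t ⬝ᵥ ((M0 - t • M) *ᵥ a t)) 0 l :=
    (hasDerivAt_const l c).congr_of_eventuallyEq hc
  have h1 : HasDerivAt (fun t => a t ⬝ᵥ ((M0 - t • M) *ᵥ a t))
      (∑ i, (a' i * (∑ j, (M0 i j - l * M i j) * a l j) +
        a l i * ∑ j, ((0 - 1 * M i j) * a l j + (M0 i j - l * M i j) * a' j))) l := by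
    simp only [dotProduct, mulVec, Matrix.sub_apply, Matrix.smul_apply, smul_eq_mul]
    refine HasDerivAt.fun_sum fun i _ => (ha i).mul (HasDerivAt.fun_sum fun j _ => ?_)
    exact ((hasDerivAt_const l (M0 i j)).sub ((hasDerivAt_id l).mul_const (M i j))).mul (ha j)
  have h2 := h1.unique h0
  have s : ∀ i j, M i j = M j i := fun i j => hM.apply j i
  simp only [dotProduct, mulVec, Matrix.sub_apply, Matrix.smul_apply, smul_eq_mul,
    Fin.sum_univ_four] at h2 ⊢
  rw [s 1 0, s 2 0, s 3 0, s 2 1, s 3 1, s 3 2] at *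
  simp [M0] at h2 ⊢
  linear_combination (1 / 2) * h2

theorem quad_smul (N : Matrix (Fin 4) (Fin 4) ℂ) (c : ℂ) (X : Fin 4 → ℂ) :
    (c • X) ⬝ᵥ (N *ᵥ (c • X)) = c ^ 2 * (X ⬝ᵥ (N *ᵥ X)) := by
  simp only [Matrix.mulVec_smul, dotProduct_smul, smul_dotProduct, smul_eq_mul]
  ring

/-- The Jacobian determinant of `ψ`, in the form `Φ₄⁴ · det Dψ = -det A · Q∞(Φ)`. -/
theorem det_jac_psi
    (M : Matrix (Fin 4) (Fin 4) ℂ) (hM : M.IsSymm)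
    (U : Set ℂ) (hU : IsOpen U)
    (A : ℂ → Matrix (Fin 4) (Fin 4) ℂ)
    (hAhol : ∀ i j, DifferentiableOn ℂ (fun l => A l i j) U)
    (hAinv : ∀ l ∈ U, IsUnit (A l).det)
    (hAnorm : ∀ l ∈ U, (A l)ᵀ * (M0 - l • M) * A l = M0)
    (Φ : (Fin 3 → ℂ) → Fin 4 → ℂ)
    (hΦ : ∀ v, Φ v = A (v 2) *ᵥ ![v 0, v 1, v 0 * v 1, 1])
    (ψ : (Fin 3 → ℂ) → Fin 3 → ℂ)
    (hψ : ∀ v, ψ v = ![Φ v 0 / Φ v 3, Φ v 1 / Φ v 3, Φ v 2 / Φ v 3])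
    (v : Fin 3 → ℂ) (hv : v 2 ∈ U) (h4 : Φ v 3 ≠ 0) :
    (jac3 ψ v).det * Φ v 3 ^ 4 = -(A (v 2)).det * (1 / 2 * (Φ v ⬝ᵥ (M *ᵥ Φ v))) := by
  have hA : ∀ i j, HasDerivAt (fun l => A l i j) (deriv (fun l => A l i j) (v 2)) (v 2) :=
    fun i j => ((hAhol i j).differentiableAt (hU.mem_nhds hv)).hasDerivAt
  obtain ⟨A', hA'⟩ : ∃ A' : Matrix (Fin 4) (Fin 4) ℂ,
      ∀ i j, HasDerivAt (fun l => A l i j) (A' i j) (v 2) := ⟨fun i j => _, hA⟩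
  set S : Fin 4 → ℂ := ![v 0, v 1, v 0 * v 1, 1] with hS
  -- The columns of `D` are the partial derivatives `A Sₓ`, `A S_y` and `A' S` of `Φ`.
  let D : Fin 4 → Fin 3 → ℂ := fun i =>
    ![(A (v 2) *ᵥ ![1, 0, v 1, 0]) i, (A (v 2) *ᵥ ![0, 1, v 0, 0]) i, (A' *ᵥ S) i]
  have hD : ∀ i, ∃ L : (Fin 3 → ℂ) →L[ℂ] ℂ, HasFDerivAt (fun w => Φ w i) L v ∧
      ∀ j, L (Pi.single j 1) = D i j := by
    intro i
    have p : ∀ k : Fin 3, HasFDerivAt (fun w : Fin 3 → ℂ => w k)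
        (ContinuousLinearMap.proj (R := ℂ) (φ := fun _ : Fin 3 => ℂ) k) v :=
      fun k => hasFDerivAt_apply k v
    have q : ∀ j, HasFDerivAt (fun w : Fin 3 → ℂ => A (w 2) i j)
        (A' i j • ContinuousLinearMap.proj (R := ℂ) (φ := fun _ : Fin 3 => ℂ) 2) v :=
      fun j => HasDerivAt.comp_hasFDerivAt (h₂ := fun l => A l i j) v (hA' i j) (p 2)
    have e : (fun w => Φ w i) = fun w => A (w 2) i 0 * w 0 + A (w 2) i 1 * w 1 +
        A (w 2) i 2 * (w 0 * w 1) + A (w 2) i 3 := by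
      funext w
      rw [hΦ]
      simp [mulVec, dotProduct, Fin.sum_univ_four]
    rw [e]
    refine ⟨_, ((((q 0).mul (p 0)).add ((q 1).mul (p 1))).add
      ((q 2).mul ((p 0).mul (p 1)))).add (q 3), ?_⟩
    intro j
    fin_cases j <;> simp [D, hS, mulVec, dotProduct, Fin.sum_univ_four] <;> ring
  choose L hL hLD using hD
  have hjac : jac3 ψ v = Matrix.of fun i j : Fin 3 =>
      (D i.castSucc j * Φ v 3 - Φ v i.castSucc * D 3 j) / Φ v 3 ^ 2 := by
    have h1 : ∀ i : Fin 3, HasFDerivAt (fun w => ψ w i)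
        ((Φ v 3 ^ 2)⁻¹ • (Φ v 3 • L i.castSucc - Φ v i.castSucc • L 3)) v := by
      intro i
      have e : (fun w => ψ w i) = fun w => Φ w i.castSucc / Φ w 3 := by
        funext w
        rw [hψ]
        fin_cases i <;> rfl
      rw [e]
      have h := (hL i.castSucc).mul ((hasDerivAt_inv h4).comp_hasFDerivAt v (hL 3))
      refine (h.congr_fderiv ?_).congr_of_eventuallyEq (Filter.Eventually.of_forall fun w => ?_)
      · ext1 u
        simp
        field_simp
        ring
      · simp [div_eq_mul_inv]
    have h2 := (hasFDerivAt_pi.2 h1).fderiv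
    ext i j
    simp only [jac3, Matrix.of_apply]
    rw [show fderiv ℂ ψ v = _ from h2]
    simp only [ContinuousLinearMap.coe_pi', _root_.smul_apply,
      _root_.sub_apply, hLD, smul_eq_mul]
    ring
  rw [hjac, det_affine _ _ h4]
  have hu := hAinv _ hv
  let Z : Fin 4 → ℂ := (A (v 2))⁻¹ *ᵥ (A' *ᵥ S)
  have hZ : A (v 2) *ᵥ Z = A' *ᵥ S := by
    simp only [Z]
    rw [Matrix.mulVec_mulVec, Matrix.mul_nonsing_inv _ hu, Matrix.one_mulVec]
  have hfac : (Matrix.of fun i : Fin 4 => ![D i 0, D i 1, D i 2, Φ v i]) =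
      A (v 2) * Matrix.of fun i : Fin 4 =>
        ![![1, 0, v 1, 0] i, ![0, 1, v 0, 0] i, Z i, ![v 0, v 1, v 0 * v 1, 1] i] := by
    ext i j
    rw [hΦ]
    fin_cases j
    · simp [D, Matrix.mul_apply, mulVec, dotProduct, Fin.sum_univ_four]
    · simp [D, Matrix.mul_apply, mulVec, dotProduct, Fin.sum_univ_four]
    · change (A' *ᵥ S) i = _
      rw [← hZ]
      simp [Matrix.mul_apply, mulVec, dotProduct]
    · simp [Matrix.mul_apply, mulVec, dotProduct, Fin.sum_univ_four]
  rw [hfac, Matrix.det_mul, det_tangent, ← hS]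
  have hmove : ∀ l ∈ U, ∀ X Y : Fin 4 → ℂ,
      (A l *ᵥ X) ⬝ᵥ ((M0 - l • M) *ᵥ (A l *ᵥ Y)) = X ⬝ᵥ (M0 *ᵥ Y) := by
    intro l hl X Y
    have h := congrArg (fun N => X ⬝ᵥ (N *ᵥ Y)) (hAnorm l hl)
    simp only [← Matrix.mulVec_mulVec] at h
    rwa [Matrix.dotProduct_mulVec X, Matrix.vecMul_transpose] at h
  have hpd := pencil_deriv M hM (fun l => A l *ᵥ S) (A' *ᵥ S) (v 2) (S ⬝ᵥ (M0 *ᵥ S))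
    (fun i => by
      simpa only [mulVec, dotProduct] using
        HasDerivAt.fun_sum fun j (_ : j ∈ Finset.univ) => (hA' i j).mul_const (S j))
    (Filter.eventually_of_mem (hU.mem_nhds hv) fun l hl => hmove l hl S S)
  rw [← hZ, hmove _ hv] at hpd
  rw [hpd, hΦ v, ← hS]
  ring

/-- Theorem 1 of the paper: a 3D QRT map, which preserves each level set `λ = const` and
restricts there to a 2D QRT map with invariant area density `P∞ ∘ Φ` in pencil-adapted
coordinates, preserves the volume form `dx₁∧dx₂∧dx₃/ρ` with `ρ = Q∞·P∞` in the affine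
coordinates of the chart `{X₄ ≠ 0}`. Here points of `ℂ³` carry coordinates `(x,y,λ)`
(pencil-adapted) indexed by `0,1,2`, `Φ(x,y,λ) = A(λ)·(x,y,xy,1)ᵀ`, and
`ψ = (Φ₁/Φ₄, Φ₂/Φ₄, Φ₃/Φ₄) : V → W` is a biholomorphism. -/
theorem stmt0
    (Minf Ninf : Matrix (Fin 4) (Fin 4) ℂ)
    (hMsymm : Minf.IsSymm) (hNsymm : Ninf.IsSymm)
    (Qinf Pinf : (Fin 4 → ℂ) → ℂ)
    (hQinf : ∀ X, Qinf X = (1 / 2) * (X ⬝ᵥ (Minf *ᵥ X)))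
    (hPinf : ∀ X, Pinf X = (1 / 2) * (X ⬝ᵥ (Ninf *ᵥ X)))
    (U : Set ℂ) (hU : IsOpen U)
    (A : ℂ → Matrix (Fin 4) (Fin 4) ℂ)
    (hAhol : ∀ i j, DifferentiableOn ℂ (fun l => A l i j) U)
    (hAinv : ∀ l ∈ U, IsUnit (A l).det)
    (hAnorm : ∀ l ∈ U, (A l)ᵀ * (M0 - l • Minf) * A l = M0)
    (Φ : (Fin 3 → ℂ) → Fin 4 → ℂ)
    (hΦ : ∀ v, Φ v = A (v 2) *ᵥ ![v 0, v 1, v 0 * v 1, 1])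
    (V : Set (Fin 3 → ℂ)) (hV : IsOpen V) (hVU : ∀ v ∈ V, v 2 ∈ U)
    (hΦ4 : ∀ v ∈ V, Φ v 3 ≠ 0)
    (ψ : (Fin 3 → ℂ) → Fin 3 → ℂ)
    (hψ : ∀ v, ψ v = ![Φ v 0 / Φ v 3, Φ v 1 / Φ v 3, Φ v 2 / Φ v 3])
    (W : Set (Fin 3 → ℂ)) (hW : IsOpen W)
    (hψhol : DifferentiableOn ℂ ψ V)
    (hψmaps : Set.MapsTo ψ V W)
    (hψsurj : Set.SurjOn ψ V W)
    (ψinv : (Fin 3 → ℂ) → Fin 3 → ℂ)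
    (hψinvhol : DifferentiableOn ℂ ψinv W)
    (hψinvmaps : Set.MapsTo ψinv W V)
    (hleft : ∀ v ∈ V, ψinv (ψ v) = v)
    (hright : ∀ w ∈ W, ψ (ψinv w) = w)
    (g : (Fin 3 → ℂ) → Fin 3 → ℂ)
    (hghol : DifferentiableOn ℂ g V)
    (hgmaps : Set.MapsTo g V V)
    (hgform : ∀ v ∈ V, g v 2 = v 2)
    (hPne : ∀ v ∈ V, Pinf (Φ v) ≠ 0)
    (hgjac : ∀ v ∈ V, (jac3 g v).det = Pinf (Φ (g v)) / Pinf (Φ v))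
    (ρ : (Fin 3 → ℂ) → ℂ)
    (hρ : ∀ w, ρ w = Qinf ![w 0, w 1, w 2, 1] * Pinf ![w 0, w 1, w 2, 1])
    (f : (Fin 3 → ℂ) → Fin 3 → ℂ) (hf : f = ψ ∘ g ∘ ψinv) :
    ∀ p ∈ W, ρ p ≠ 0 → (jac3 f p).det = ρ (f p) / ρ p := by
  intro p hp hρp
  obtain ⟨v, hv, rfl⟩ := hψsurj hp
  have hgv := hgmaps hv
  have hfψ : f (ψ v) = ψ (g v) := by simp [hf, hleft v hv]
  have dψ : ∀ w ∈ V, DifferentiableAt ℂ ψ w := fun w hw => hψhol.differentiableAt (hV.mem_nhds hw)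
  have dg : DifferentiableAt ℂ g v := hghol.differentiableAt (hV.mem_nhds hv)
  have dinv : DifferentiableAt ℂ ψinv (ψ v) := hψinvhol.differentiableAt (hW.mem_nhds hp)
  have df : DifferentiableAt ℂ f (ψ v) := by
    rw [hf]
    refine DifferentiableAt.comp _ ?_ (DifferentiableAt.comp _ ?_ dinv)
    · simpa [hleft v hv] using dψ _ hgv
    · simpa [hleft v hv] using dg
  have hconj : jac3 (f ∘ ψ) v = jac3 (ψ ∘ g) v := by
    have : f ∘ ψ =ᶠ[nhds v] ψ ∘ g := Filter.eventually_of_mem (hV.mem_nhds hv) fun w hw => by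
      simp [hf, hleft w hw]
    simp only [jac3, this.fderiv_eq]
  rw [jac3_comp df (dψ v hv), jac3_comp (dψ _ hgv) dg] at hconj
  have hdet := congrArg Matrix.det hconj
  rw [Matrix.det_mul, Matrix.det_mul, hgjac v hv] at hdet
  -- `ρ` in terms of the homogeneous coordinates `Φ`.
  have hρψ : ∀ w ∈ V, Qinf (Φ w) * Pinf (Φ w) = Φ w 3 ^ 4 * ρ (ψ w) := by
    intro w hw
    have h4 := hΦ4 w hw
    have hX : Φ w = Φ w 3 • ![ψ w 0, ψ w 1, ψ w 2, 1] := by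
      ext i
      rw [hψ]
      fin_cases i <;> simp <;> field_simp
    rw [hρ, hQinf, hPinf, hQinf, hPinf]
    generalize Φ w 3 = c at hX
    rw [hX, quad_smul, quad_smul]
    ring
  have hJ : ∀ w ∈ V, (jac3 ψ w).det * Pinf (Φ w) = -(A (w 2)).det * ρ (ψ w) := by
    intro w hw
    have h4 := hΦ4 w hw
    have h1 := det_jac_psi Minf hMsymm U hU A hAhol hAinv hAnorm Φ hΦ ψ hψ w (hVU w hw) h4
    rw [← hQinf] at h1
    apply mul_right_cancel₀ (pow_ne_zero 4 h4)
    linear_combination Pinf (Φ w) * h1 - (A (w 2)).det * hρψ w hw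
  have J1 := hJ v hv
  have J2 := hJ _ hgv
  rw [hgform v hv] at J2
  have hP1 := hPne v hv
  have hP2 := hPne _ hgv
  have hA0 : (A (v 2)).det ≠ 0 := (hAinv _ (hVU v hv)).ne_zero
  rw [hfψ, eq_div_iff hρp]
  apply mul_left_cancel₀ (neg_ne_zero.2 hA0)
  have h3 : (jac3 f (ψ v)).det * (jac3 ψ v).det * Pinf (Φ v) =
      (jac3 ψ (g v)).det * Pinf (Φ (g v)) := by
    rw [hdet]
    field_simp
  linear_combination h3 - (jac3 f (ψ v)).det * J1 + J2
end

section
/- Let m be a positive integer and let X̃ : ℂ⁴ → ℂ⁴ be a holomorphic map each of whose components is homogeneous of degree m, i.e. X̃(c·v) = cᵐ·X̃(v) for all c ∈ ℂ and v ∈ ℂ⁴. Let v ∈ ℂ⁴ be a point with v₄ ≠ 0 and X̃₄(v) ≠ 0, and define, on a neighbourhood of (v₁/v₄, v₂/v₄, v₃/v₄) in ℂ³, the map f(x₁,x₂,x₃) := ( X̃₁(x₁,x₂,x₃,1)/X̃₄(x₁,x₂,x₃,1), X̃₂(x₁,x₂,x₃,1)/X̃₄(x₁,x₂,x₃,1),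 X̃₃(x₁,x₂,x₃,1)/X̃₄(x₁,x₂,x₃,1) ). Then det(DX̃(v)) = m · (X̃₄(v)⁴ / v₄⁴) · det(Df(v₁/v₄, v₂/v₄, v₃/v₄)), where DX̃(v) is the 4×4 complex Jacobian matrix of X̃ at v and Df is the 3×3 complex Jacobian matrix of f. -/
/-!
Homogeneity gives two facts: `c • DX̃(c w) = c ^ m • DX̃(w)`, which moves the problem from `v` to
the representative `w = v / v₄` whose last coordinate is `1`, and Euler's relation
`DX̃(w) w = m X̃(w)`. As `w₄ = 1`, Euler's relation replaces the last column of `DX̃(w)` by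
`m X̃(w)` without changing the determinant. Subtracting multiples of the last row then clears the
first three entries of that column, and by the quotient rule the remaining `3 × 3` block is
`X̃₄(w) Df`. This gives `det DX̃(w) = m X̃₄(w)⁴ det Df`, which is a polynomial identity in the entries
once the quotient rule and Euler's relation are substituted.
-/

open Matrix

/-- The 4×4 complex Jacobian matrix (matrix of partial complex derivatives) of a map
`X̃ : ℂ⁴ → ℂ⁴` at a point `v`. -/
noncomputable def jac4 (X : (Fin 4 → ℂ) → Fin 4 → ℂ) (v : Fin 4 → ℂ) :
    Matrix (Fin 4) (Fin 4) ℂ :=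
  Matrix.of fun i j => fderiv ℂ X v (Pi.single j 1) i

/-- The linear algebra behind the formula: `A` plays the role of `DX̃(w)`, `x` of `X̃(w)`, and `B` of
`Df`, with Euler's relation and the quotient rule as hypotheses. -/
lemma det_eq_of_euler_of_quotient (A : Matrix (Fin 4) (Fin 4) ℂ) (B : Matrix (Fin 3) (Fin 3) ℂ)
    (x w : Fin 4 → ℂ) (m : ℂ) (hx : x 3 ≠ 0) (hw : w 3 = 1)
    (hE : ∀ i, ∑ j, A i j * w j = m * x i)
    (hB : ∀ (i j : Fin 3),
      B i j = (A i.castSucc j.castSucc * x 3 - x i.castSucc * A 3 j.castSucc) / x 3 ^ 2) :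
    A.det = m * x 3 ^ 4 * B.det := by
  have hE' : ∀ i, A i 3 = m * x i - (A i 0 * w 0 + A i 1 * w 1 + A i 2 * w 2) := by
    intro i
    have h := hE i
    rw [Fin.sum_univ_four, hw] at h
    linear_combination h
  have hA : A.det =
      A 0 0 * (A 1 1 * (A 2 2 * A 3 3 - A 2 3 * A 3 2) - A 1 2 * (A 2 1 * A 3 3 - A 2 3 * A 3 1)
        + A 1 3 * (A 2 1 * A 3 2 - A 2 2 * A 3 1))
      - A 0 1 * (A 1 0 * (A 2 2 * A 3 3 - A 2 3 * A 3 2) - A 1 2 * (A 2 0 * A 3 3 - A 2 3 * A 3 0)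
        + A 1 3 * (A 2 0 * A 3 2 - A 2 2 * A 3 0))
      + A 0 2 * (A 1 0 * (A 2 1 * A 3 3 - A 2 3 * A 3 1) - A 1 1 * (A 2 0 * A 3 3 - A 2 3 * A 3 0)
        + A 1 3 * (A 2 0 * A 3 1 - A 2 1 * A 3 0))
      - A 0 3 * (A 1 0 * (A 2 1 * A 3 2 - A 2 2 * A 3 1) - A 1 1 * (A 2 0 * A 3 2 - A 2 2 * A 3 0)
        + A 1 2 * (A 2 0 * A 3 1 - A 2 1 * A 3 0)) := by
    rw [Matrix.det_succ_row_zero, Fin.sum_univ_four]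
    simp only [Matrix.det_fin_three, Matrix.submatrix_apply]
    simp [Fin.succAbove, Fin.lt_def]
    ring
  rw [hA, Matrix.det_fin_three]
  simp only [hB]
  rw [hE' 0, hE' 1, hE' 2, hE' 3]
  simp only [show (Fin.castSucc (0 : Fin 3)) = (0 : Fin 4) from rfl,
    show (Fin.castSucc (1 : Fin 3)) = (1 : Fin 4) from rfl,
    show (Fin.castSucc (2 : Fin 3)) = (2 : Fin 4) from rfl]
  field_simp
  ring

/-- Euler's relation for a homogeneous holomorphic map. -/
lemma euler_relation {m : ℕ} {X : (Fin 4 → ℂ) → Fin 4 → ℂ} (hX : Differentiable ℂ X)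
    (hhom : ∀ (c : ℂ) (v : Fin 4 → ℂ), X (c • v) = c ^ m • X v) (w : Fin 4 → ℂ) :
    fderiv ℂ X w w = (m : ℂ) • X w := by
  have h1 : HasDerivAt (fun c : ℂ => c • w) w 1 := by
    simpa using (hasDerivAt_id (1 : ℂ)).smul_const w
  have h2 : HasFDerivAt X (fderiv ℂ X w) ((1 : ℂ) • w) := by
    rw [one_smul]
    exact (hX w).hasFDerivAt
  have h3 := h2.comp_hasDerivAt (1 : ℂ) h1
  have h4 : HasDerivAt (fun c : ℂ => c ^ m • X w) ((m : ℂ) • X w) 1 := by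
    simpa using (hasDerivAt_pow m (1 : ℂ)).smul_const (X w)
  have h5 : X ∘ (fun c : ℂ => c • w) = fun c : ℂ => c ^ m • X w := funext fun c => hhom c w
  rw [h5] at h3
  exact h3.unique h4

lemma smul_fderiv_smul {m : ℕ} {X : (Fin 4 → ℂ) → Fin 4 → ℂ} (hX : Differentiable ℂ X)
    (hhom : ∀ (c : ℂ) (v : Fin 4 → ℂ), X (c • v) = c ^ m • X v) (c : ℂ) (w : Fin 4 → ℂ) :
    c • fderiv ℂ X (c • w) = c ^ m • fderiv ℂ X w := by
  have h1 : HasFDerivAt (fun u : Fin 4 → ℂ => c • u)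
      (c • ContinuousLinearMap.id ℂ (Fin 4 → ℂ)) w := (hasFDerivAt_id w).const_smul c
  have h2 := (hX (c • w)).hasFDerivAt.comp w h1
  have h3 : HasFDerivAt (fun u => c ^ m • X u) (c ^ m • fderiv ℂ X w) w :=
    (hX w).hasFDerivAt.const_smul (c ^ m)
  have h5 : X ∘ (fun u => c • u) = fun u => c ^ m • X u := funext fun u => hhom c u
  rw [h5] at h2
  rw [← h2.unique h3]
  ext u i
  simp

/-- The quotient rule for the expression of `X` in the affine chart. -/
lemma jac3_chart {X : (Fin 4 → ℂ) → Fin 4 → ℂ} (hX : Differentiable ℂ X)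
    {f : (Fin 3 → ℂ) → Fin 3 → ℂ}
    (hf : ∀ u (i : Fin 3),
      f u i = X ![u 0, u 1, u 2, 1] i.castSucc / X ![u 0, u 1, u 2, 1] 3)
    (p : Fin 3 → ℂ) (hp : X ![p 0, p 1, p 2, 1] 3 ≠ 0) (i j : Fin 3) :
    jac3 f p i j =
      (jac4 X ![p 0, p 1, p 2, 1] i.castSucc j.castSucc * X ![p 0, p 1, p 2, 1] 3
        - X ![p 0, p 1, p 2, 1] i.castSucc * jac4 X ![p 0, p 1, p 2, 1] 3 j.castSucc)
        / X ![p 0, p 1, p 2, 1] 3 ^ 2 := by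
  have hdiff : Differentiable ℂ (fun u : Fin 3 → ℂ => (![u 0, u 1, u 2, 1] : Fin 4 → ℂ)) := by
    rw [differentiable_pi]
    intro k
    fin_cases k <;> simp <;> fun_prop
  have hcomp : ∀ k : Fin 4, Differentiable ℂ fun u : Fin 3 → ℂ => X ![u 0, u 1, u 2, 1] k :=
    fun k => differentiable_pi.1 (hX.comp hdiff) k
  have hfd : DifferentiableAt ℂ f p := by
    rw [differentiableAt_pi]
    intro k
    simp only [hf]
    have h := hcomp 3 p
    have h' := hcomp k.castSucc p
    simp only [div_eq_mul_inv]
    exact h'.fun_mul (h.fun_inv hp)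
  -- Partial derivatives are computed along the line `t ↦ p + t eⱼ`.
  have hline : HasDerivAt (fun t : ℂ => p + t • (Pi.single j 1 : Fin 3 → ℂ)) (Pi.single j 1) 0 := by
    simpa using ((hasDerivAt_id (0 : ℂ)).smul_const (Pi.single j 1 : Fin 3 → ℂ)).const_add p
  have hline4 : ∀ t : ℂ, (![(p + t • (Pi.single j 1 : Fin 3 → ℂ)) 0,
      (p + t • (Pi.single j 1 : Fin 3 → ℂ)) 1, (p + t • (Pi.single j 1 : Fin 3 → ℂ)) 2, 1] :
      Fin 4 → ℂ) = ![p 0, p 1, p 2, 1] + t • (Pi.single j.castSucc 1 : Fin 4 → ℂ) := by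
    intro t
    ext k
    fin_cases j <;> fin_cases k <;> simp
  have hl4 : HasDerivAt (fun t : ℂ => ![p 0, p 1, p 2, 1] +
      t • (Pi.single j.castSucc 1 : Fin 4 → ℂ)) (Pi.single j.castSucc 1) 0 := by
    simpa using ((hasDerivAt_id (0 : ℂ)).smul_const
      (Pi.single j.castSucc 1 : Fin 4 → ℂ)).const_add ![p 0, p 1, p 2, 1]
  have hXl : ∀ k, HasDerivAt (fun t : ℂ => X (![p 0, p 1, p 2, 1] +
      t • (Pi.single j.castSucc 1 : Fin 4 → ℂ)) k)
      (jac4 X ![p 0, p 1, p 2, 1] k j.castSucc) 0 := by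
    have h : HasFDerivAt X (fderiv ℂ X ![p 0, p 1, p 2, 1])
        (![p 0, p 1, p 2, 1] + (0 : ℂ) • (Pi.single j.castSucc 1 : Fin 4 → ℂ)) := by
      rw [zero_smul, add_zero]
      exact (hX _).hasFDerivAt
    exact hasDerivAt_pi.1 (h.comp_hasDerivAt (0 : ℂ) hl4)
  have hfl : HasDerivAt (fun t : ℂ => f (p + t • (Pi.single j 1 : Fin 3 → ℂ)) i)
      (jac3 f p i j) 0 := by
    have h : HasFDerivAt f (fderiv ℂ f p) (p + (0 : ℂ) • (Pi.single j 1 : Fin 3 → ℂ)) := by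
      rw [zero_smul, add_zero]
      exact hfd.hasFDerivAt
    exact hasDerivAt_pi.1 (h.comp_hasDerivAt (0 : ℂ) hline) i
  simp only [hf, hline4] at hfl
  have hq := (hXl i.castSucc).fun_div (hXl 3) (by simpa using hp)
  simpa using hfl.unique hq

/-- Proposition 2 of the paper: for a holomorphic map `X̃ : ℂ⁴ → ℂ⁴` whose components are
homogeneous of degree `m`, and the induced map `f` in the affine chart `{X₄ ≠ 0}`,
one has `det DX̃(v) = m·(X̃₄(v)⁴/v₄⁴)·det Df(v₁/v₄, v₂/v₄, v₃/v₄)`. -/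
theorem stmt1 (m : ℕ) (hm : 0 < m)
    (Xt : (Fin 4 → ℂ) → Fin 4 → ℂ)
    (hhol : Differentiable ℂ Xt)
    (hhom : ∀ (c : ℂ) (v : Fin 4 → ℂ), Xt (c • v) = c ^ m • Xt v)
    (v : Fin 4 → ℂ) (hv4 : v 3 ≠ 0) (hX4 : Xt v 3 ≠ 0)
    (f : (Fin 3 → ℂ) → Fin 3 → ℂ)
    (hf : ∀ u (i : Fin 3),
      f u i = Xt ![u 0, u 1, u 2, 1] i.castSucc / Xt ![u 0, u 1, u 2, 1] 3) :
    (jac4 Xt v).det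
      = (m : ℂ) * (Xt v 3 ^ 4 / v 3 ^ 4) *
          (jac3 f ![v 0 / v 3, v 1 / v 3, v 2 / v 3]).det := by
  set p : Fin 3 → ℂ := ![v 0 / v 3, v 1 / v 3, v 2 / v 3] with hp
  set w : Fin 4 → ℂ := ![p 0, p 1, p 2, 1] with hw
  have hvw : v = v 3 • w := by
    ext k
    fin_cases k <;> simp [hw, hp] <;> field_simp
  have hXv : Xt v = v 3 ^ m • Xt w := by
    conv_lhs => rw [hvw]
    exact hhom _ _
  have hXw : Xt w 3 ≠ 0 := by
    intro h
    apply hX4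
    rw [hXv]
    simp [h]
  have hdet : (jac4 Xt w).det = (m : ℂ) * Xt w 3 ^ 4 * (jac3 f p).det := by
    refine det_eq_of_euler_of_quotient _ _ (Xt w) w m hXw (by simp [hw]) (fun i => ?_)
      (jac3_chart hhol hf p hXw)
    have h := congrFun (euler_relation hhol hhom w) i
    rw [Pi.smul_apply, smul_eq_mul] at h
    have hsum : fderiv ℂ Xt w w = ∑ j, w j • fderiv ℂ Xt w (Pi.single j 1) := by
      rw [← ContinuousLinearMap.coe_coe, (fderiv ℂ Xt w).toLinearMap.pi_apply_eq_sum_univ w]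
      refine Finset.sum_congr rfl fun j _ => ?_
      congr 2
      ext k
      simp [Pi.single_apply, eq_comm]
    rw [← h, hsum]
    simp [jac4, mul_comm]
  have hjac : v 3 • jac4 Xt v = v 3 ^ m • jac4 Xt w := by
    have h := smul_fderiv_smul hhol hhom (v 3) w
    rw [← hvw] at h
    ext i j
    exact congrFun (DFunLike.congr_fun h (Pi.single j 1)) i
  have hscale : v 3 ^ 4 * (jac4 Xt v).det = (v 3 ^ m) ^ 4 * (jac4 Xt w).det := by
    simpa [Matrix.det_smul] using congrArg Matrix.det hjac
  have hXv3 : Xt v 3 = v 3 ^ m * Xt w 3 := by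
    rw [hXv, Pi.smul_apply, smul_eq_mul]
  rw [hXv3]
  field_simp
  rw [mul_comm, hscale, hdet]
  ring
end

section
/- Let W ⊆ ℂ³ be open and X : W → ℂ⁴ be holomorphic with X₄(u) ≠ 0 for all u ∈ W. Define xᵢ := Xᵢ/X₄ : W → ℂ for i = 1,2,3. Then for every u ∈ W, the determinant of the 3×3 complex Jacobian matrix ∂(x₁,x₂,x₃)/∂(u₁,u₂,u₃) at u equals X₄(u)⁻⁴ times the determinant of the 4×4 matrix whose columns are ∂X/∂u₁(u), ∂X/∂u₂(u), ∂X/∂u₃(u), and X(u). -/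
/-!
By the quotient rule, the `j`-th column of the Jacobian of `x` is the image of `∂ⱼX` under the
linear map `v ↦ (vᵢ X₄ - Xᵢ v₄) / X₄²`, whose kernel is spanned by `X`. In the bordered 4×4
determinant, subtracting multiples of the last column `X` clears the first three entries of the
last row, and expansion along that row leaves `X₄` times a 3×3 determinant, namely that of
`X₄ • jac3 x u`. This gives the factor `X₄ * X₄³ = X₄⁴`. The determinant identity is purely
algebraic and is isolated in `det_quotient_rule`, where it is checked by expansion.
-/

open Matrix

/-- Algebraic core: if a 3×3 matrix has entries `(Dᵢⱼ t - yᵢ D₄ⱼ) / t²` (the quotient rule), its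
determinant is `t⁻⁴` times that of `D` bordered on the right by the column `y`, where `t = y₄`. -/
theorem det_quotient_rule (D : Fin 4 → Fin 3 → ℂ) (y : Fin 4 → ℂ) (hy : y 3 ≠ 0) :
    Matrix.det (Matrix.of fun i j : Fin 3 =>
        (D i.castSucc j * y 3 - y i.castSucc * D 3 j) / y 3 ^ 2)
      = (y 3)⁻¹ ^ 4 * Matrix.det (Matrix.of fun (i : Fin 4) (j : Fin 4) =>
          Fin.lastCases (motive := fun _ => ℂ) (y i) (fun j' : Fin 3 => D i j') j) := by
  have h : (Matrix.of fun (i : Fin 4) (j : Fin 4) =>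
      Fin.lastCases (motive := fun _ => ℂ) (y i) (fun j' : Fin 3 => D i j') j)
      = !![D 0 0, D 0 1, D 0 2, y 0; D 1 0, D 1 1, D 1 2, y 1;
           D 2 0, D 2 1, D 2 2, y 2; D 3 0, D 3 1, D 3 2, y 3] := by
    ext i j
    fin_cases i <;> fin_cases j <;> rfl
  have e0 : (Fin.castSucc (0 : Fin 3)) = 0 := rfl
  have e1 : (Fin.castSucc (1 : Fin 3)) = 1 := rfl
  have e2 : (Fin.castSucc (2 : Fin 3)) = 2 := rfl
  rw [h, Matrix.det_fin_three, Matrix.det_succ_row_zero]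
  simp [Fin.sum_univ_succ, Matrix.det_fin_three, Fin.succAbove, e0, e1, e2]
  field_simp
  ring

/-- Section 7 of the paper: for a holomorphic `X : W → ℂ⁴` with `X₄ ≠ 0` on the open set
`W ⊆ ℂ³`, and `xᵢ = Xᵢ/X₄`, the Jacobian determinant `det ∂(x₁,x₂,x₃)/∂(u₁,u₂,u₃)` equals
`X₄⁻⁴` times the determinant of the 4×4 matrix with columns `∂X/∂u₁, ∂X/∂u₂, ∂X/∂u₃, X`. -/
theorem stmt2 (W : Set (Fin 3 → ℂ)) (hW : IsOpen W)
    (X : (Fin 3 → ℂ) → Fin 4 → ℂ) (hX : DifferentiableOn ℂ X W)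
    (hX4 : ∀ u ∈ W, X u 3 ≠ 0)
    (x : (Fin 3 → ℂ) → Fin 3 → ℂ)
    (hx : ∀ u (i : Fin 3), x u i = X u i.castSucc / X u 3) :
    ∀ u ∈ W,
      (jac3 x u).det
        = (X u 3)⁻¹ ^ 4 *
            Matrix.det (Matrix.of fun (i : Fin 4) (j : Fin 4) =>
              Fin.lastCases (X u i)
                (fun j' : Fin 3 => fderiv ℂ X u (Pi.single j' 1) i) j) := by
  intro u hu
  have hXu : HasFDerivAt X (fderiv ℂ X u) u :=
    (hX.differentiableAt (hW.mem_nhds hu)).hasFDerivAt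
  have hc := hasFDerivAt_pi'.1 hXu
  rw [← det_quotient_rule (fun i j => fderiv ℂ X u (Pi.single j 1) i) (X u) (hX4 u hu)]
  congr 1
  ext i j
  have hq (i : Fin 3) :=
    (hc i.castSucc).mul ((hasDerivAt_inv (hX4 u hu)).comp_hasFDerivAt u (hc 3))
  have hfd := (hasFDerivAt_pi.2 hq).congr_of_eventuallyEq (f₁ := x)
    (.of_forall fun v => funext fun k => by simp [hx, div_eq_mul_inv])
  have h4 := hX4 u hu
  simp only [jac3, Matrix.of_apply, hfd.fderiv]
  simp
  field_simp
  ring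
end

section
/- Let C₀, C∞ be 3×3 complex matrices. Define B₀(x,y) := (x², x, 1)·C₀·(y², y, 1)ᵀ, B∞(x,y) := (x², x, 1)·C∞·(y², y, 1)ᵀ, and on the set where B∞ ≠ 0 define μ(x,y) := B₀(x,y)/B∞(x,y) and C(x,y) := C₀ − μ(x,y)·C∞. Define the vertical switch i₁(x,y) := (x, ỹ(x,y)) where ỹ(x,y) := −y − b(x,y)/a(x,y), with a(x,y) := (x², x, 1)·C(x,y)·(1,0,0)ᵀ and b(x,y) := (x², x, 1)·C(x,y)·(0,1,0)ᵀ. Let (x₀,y₀) be a point at which B∞(x₀,y₀) ≠ 0, a(x₀,y₀) ≠ 0, ỹ₁ := ỹ(x₀,y₀) satisfies B∞(x₀,ỹ₁) ≠ 0, and (x₀², x₀, 1)·C(x₀,y₀)·(2ỹ₁, 1, 0)ᵀ ≠ 0. Then the complex partial derivative ∂ỹ/∂y at (x₀,y₀) (which equals the Jacobian determinant of i₁ at (x₀,y₀)) equals −B∞(x₀,ỹ₁)/B∞(x₀,y₀). -/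
open Matrix

/-!
On a fixed vertical line `x = x₀` everything reduces to one variable. Write
`B₀ = p y² + q y + r` and `B∞ = P y² + Q y + R =: D(y)`, so that `μ = B₀ / D`,
`a = p - μ P`, `b = q - μ Q` and `ỹ = -y - b / a`. The quotient rule gives
`μ' = (2 a y + b) / D = a (y - ỹ) / D`, hence
`ỹ' = -1 + (y - ỹ) (Q a - P b) / (a D)`. On the other hand `y + ỹ = -b / a`, so
`D(ỹ) - D(y) = (ỹ - y) (P (y + ỹ) + Q) = (ỹ - y) (Q a - P b) / a`,
and dividing by `-D(y)` shows that `-D(ỹ) / D(y)` is the same expression.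
-/

/-- The switch on a single vertical line: `p, q, r` and `P, Q, R` are the coefficients in `y` of
`B₀` and `B∞` there, and `m` is the parameter of the pencil as a function of `y`. -/
lemma hasDerivAt_switch (p q r P Q R y y₁ : ℂ) (m : ℂ → ℂ)
    (hm : ∀ t, m t = (p * t ^ 2 + q * t + r) / (P * t ^ 2 + Q * t + R))
    (hD : P * y ^ 2 + Q * y + R ≠ 0) (ha : p - m y * P ≠ 0)
    (hy₁ : y₁ = -y - (q - m y * Q) / (p - m y * P)) :
    HasDerivAt (fun t => -t - (q - m t * Q) / (p - m t * P))
      (-((P * y₁ ^ 2 + Q * y₁ + R) / (P * y ^ 2 + Q * y + R))) y := by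
  have hquad (u v w : ℂ) :
      HasDerivAt (fun t : ℂ => u * t ^ 2 + v * t + w) (2 * u * y + v) y := by
    have h := (((hasDerivAt_pow 2 y).const_mul u).add
      ((hasDerivAt_id y).const_mul v)).add_const w
    refine h.congr_deriv ?_
    norm_num
    ring
  have hmy : m y * (P * y ^ 2 + Q * y + R) = p * y ^ 2 + q * y + r := by
    rw [hm y, div_mul_cancel₀ _ hD]
  -- `B₀' - μ D'` is the derivative of the curve through the point, with `μ` frozen.
  have hm' : HasDerivAt m
      ((2 * (p - m y * P) * y + (q - m y * Q)) / (P * y ^ 2 + Q * y + R)) y := by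
    have h := (hquad p q r).div (hquad P Q R) hD
    refine (h.congr_of_eventuallyEq (.of_forall hm)).congr_deriv ?_
    rw [← hmy]
    generalize P * y ^ 2 + Q * y + R = D at *
    field_simp
    ring
  have h := (hasDerivAt_id y).neg.sub
    (((hm'.mul_const Q).const_sub q).div ((hm'.mul_const P).const_sub p) ha)
  refine h.congr_deriv ?_
  -- Trading the coefficient `R` for the value `D` makes the two denominators `D` and `A` atomic.
  obtain ⟨D, hR⟩ : ∃ D, D = P * y ^ 2 + Q * y + R := ⟨_, rfl⟩
  obtain ⟨A, hA⟩ : ∃ A, A = p - m y * P := ⟨_, rfl⟩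
  rw [hy₁]
  rw [← hR] at hD ⊢
  rw [← hA] at ha ⊢
  obtain rfl : R = D - P * y ^ 2 - Q * y := by rw [hR]; ring
  field_simp
  ring

/-- The QRT vertical switch `i₁ : (x,y) ↦ (x, ỹ)` with `ỹ = −y − b/a` anti-preserves the
area form `dx∧dy/B∞`: under the stated nondegeneracy assumptions, the complex partial
derivative `∂ỹ/∂y` at `(x₀,y₀)` equals `−B∞(x₀,ỹ₁)/B∞(x₀,y₀)` where `ỹ₁ = ỹ(x₀,y₀)`. -/
theorem stmt11 (C0 Cinf : Matrix (Fin 3) (Fin 3) ℂ)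
    (B0 Binf : ℂ → ℂ → ℂ)
    (hB0 : ∀ x y, B0 x y = ![x ^ 2, x, 1] ⬝ᵥ (C0 *ᵥ ![y ^ 2, y, 1]))
    (hBinf : ∀ x y, Binf x y = ![x ^ 2, x, 1] ⬝ᵥ (Cinf *ᵥ ![y ^ 2, y, 1]))
    (μ : ℂ → ℂ → ℂ) (hμ : ∀ x y, μ x y = B0 x y / Binf x y)
    (C : ℂ → ℂ → Matrix (Fin 3) (Fin 3) ℂ)
    (hC : ∀ x y, C x y = C0 - μ x y • Cinf)
    (a b yt : ℂ → ℂ → ℂ)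
    (ha : ∀ x y, a x y = ![x ^ 2, x, 1] ⬝ᵥ (C x y *ᵥ ![1, 0, 0]))
    (hb : ∀ x y, b x y = ![x ^ 2, x, 1] ⬝ᵥ (C x y *ᵥ ![0, 1, 0]))
    (hyt : ∀ x y, yt x y = -y - b x y / a x y)
    (x₀ y₀ : ℂ)
    (h1 : Binf x₀ y₀ ≠ 0)
    (h2 : a x₀ y₀ ≠ 0)
    (h3 : Binf x₀ (yt x₀ y₀) ≠ 0)
    (h4 : ![x₀ ^ 2, x₀, 1] ⬝ᵥ (C x₀ y₀ *ᵥ ![2 * yt x₀ y₀, 1, 0]) ≠ 0) :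
    deriv (fun t => yt x₀ t) y₀ = -(Binf x₀ (yt x₀ y₀) / Binf x₀ y₀) := by
  have hmul (M : Matrix (Fin 3) (Fin 3) ℂ) (u v w : ℂ) :
      ![x₀ ^ 2, x₀, 1] ⬝ᵥ (M *ᵥ ![u, v, w]) =
        (x₀ ^ 2 * M 0 0 + x₀ * M 1 0 + M 2 0) * u + (x₀ ^ 2 * M 0 1 + x₀ * M 1 1 + M 2 1) * v
          + (x₀ ^ 2 * M 0 2 + x₀ * M 1 2 + M 2 2) * w := by
    simp [Matrix.mulVec, dotProduct, Fin.sum_univ_three]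
    ring
  let c (M : Matrix (Fin 3) (Fin 3) ℂ) (j : Fin 3) : ℂ := x₀ ^ 2 * M 0 j + x₀ * M 1 j + M 2 j
  have hBt (t : ℂ) : Binf x₀ t = c Cinf 0 * t ^ 2 + c Cinf 1 * t + c Cinf 2 := by
    rw [hBinf, hmul]; simp only [c]; ring
  have hmt (t : ℂ) : μ x₀ t = (c C0 0 * t ^ 2 + c C0 1 * t + c C0 2) /
      (c Cinf 0 * t ^ 2 + c Cinf 1 * t + c Cinf 2) := by
    rw [hμ, hBt, hB0, hmul]; simp only [c, mul_one]
  have hat (t : ℂ) : a x₀ t = c C0 0 - μ x₀ t * c Cinf 0 := by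
    rw [ha, hmul, hC]; simp [c]; ring
  have hbt (t : ℂ) : b x₀ t = c C0 1 - μ x₀ t * c Cinf 1 := by
    rw [hb, hmul, hC]; simp [c]; ring
  have hyt' (t : ℂ) : yt x₀ t =
      -t - (c C0 1 - μ x₀ t * c Cinf 1) / (c C0 0 - μ x₀ t * c Cinf 0) := by
    rw [hyt, hat, hbt]
  have key := hasDerivAt_switch _ _ _ _ _ _ y₀ (yt x₀ y₀) (μ x₀) hmt
    (hBt y₀ ▸ h1) (hat y₀ ▸ h2) (hyt' y₀)
  rw [← funext hyt', ← hBt, ← hBt] at key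
  exact key.deriv
end

section
/- Let C₀, C∞ be 3×3 complex matrices. Define B₀(x,y) := (x², x, 1)·C₀·(y², y, 1)ᵀ, B∞(x,y) := (x², x, 1)·C∞·(y², y, 1)ᵀ, and on the set where B∞ ≠ 0 define μ(x,y) := B₀(x,y)/B∞(x,y) and C(x,y) := C₀ − μ(x,y)·C∞. Define the vertical switch i₁(x,y) := (x, −y − b₁/a₁) with a₁ := (x², x, 1)·C(x,y)·(1,0,0)ᵀ, b₁ := (x², x, 1)·C(x,y)·(0,1,0)ᵀ, and the horizontal switch i₂(x,y) := (−x − b₂/a₂, y) with a₂ := (1,0,0)·C(x,y)·(y², y, 1)ᵀ, b₂ := (0,1,0)·C(x,y)·(y², y, 1)ᵀ. Let f := i₁ ∘ i₂ be the QRT map. Let p = (x₀,y₀) be a point such that all of the following are nonzero: B∞ at p, at i₂(p) and at f(p); the leading coefficients a₂ at p and a₁ at i₂(p); and the quantities (1,0,0)·C(p)·... , namely C_μ-row-derivative (2x̃,1,0)·C(p)·(y₀²,y₀,1)ᵀ at the image x̃ of i₂ and (x̃², x̃, 1)·C(i₂(p))·(2ỹ,1,0)ᵀ at the image ỹ of i₁.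 Then the determinant of the 2×2 complex Jacobian matrix of f at p equals B∞(f(p))/B∞(p). -/
/-!
Each switch reverses the sign of `dx ∧ dy / B∞`, so their composition preserves it.

For the horizontal switch fix `y` and write `B₀ = αx² + βx + γ`, `B∞ = α'x² + β'x + γ'`. Clearing
the denominator `B∞` in Vieta's formula shows that `x ↦ -x - b₂/a₂` is the Möbius involution
`x ↦ -(Qx + R)/(Px + Q)` with `P = αβ' - α'β`, `Q = αγ' - α'γ`, `R = βγ' - β'γ`. Its derivative is
`(PR - Q²)/(Px + Q)²`, while the syzygy `α'R - β'Q + γ'P = 0` gives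
`B∞(x̃) = (Q² - PR) B∞(x)/(Px + Q)²`; so the derivative is `-B∞(x̃)/B∞(x)` (`hasDerivAt_switch`).
As the switch fixes `y`, this derivative is its Jacobian determinant. The vertical switch is the
same with the roles of `x` and `y` exchanged, and the chain rule (`jac2_comp`) multiplies the two
determinants.
-/

open Matrix

/-- The 2×2 complex Jacobian matrix (matrix of partial complex derivatives) of a map
`F : ℂ × ℂ → ℂ × ℂ` at a point `p`. -/
noncomputable def jac2 (F : ℂ × ℂ → ℂ × ℂ) (p : ℂ × ℂ) : Matrix (Fin 2) (Fin 2) ℂ :=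
  !![deriv (fun t => (F (t, p.2)).1) p.1, deriv (fun t => (F (p.1, t)).1) p.2;
     deriv (fun t => (F (t, p.2)).2) p.1, deriv (fun t => (F (p.1, t)).2) p.2]

lemma differentiableAt_div_pair {u v : ℂ × ℂ → ℂ} {p : ℂ × ℂ} (hu : DifferentiableAt ℂ u p)
    (hv : DifferentiableAt ℂ v p) (h : v p ≠ 0) : DifferentiableAt ℂ (fun q => u q / v q) p := by
  simp only [div_eq_mul_inv]
  exact DifferentiableAt.fun_mul hu (hv.inv h)

lemma dotProduct_three (a b c : ℂ) (v : Fin 3 → ℂ) :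
    ![a, b, c] ⬝ᵥ v = a * v 0 + b * v 1 + c * v 2 := by
  simp [dotProduct, Fin.sum_univ_three]

lemma dotProduct_three' (a b c : ℂ) (v : Fin 3 → ℂ) :
    v ⬝ᵥ ![a, b, c] = v 0 * a + v 1 * b + v 2 * c := by
  simp [dotProduct, Fin.sum_univ_three]

/-- The chain rule for the matrix of partial derivatives. -/
lemma jac2_comp {F G : ℂ × ℂ → ℂ × ℂ} {p : ℂ × ℂ} (hF : DifferentiableAt ℂ F (G p))
    (hG : DifferentiableAt ℂ G p) : jac2 (F ∘ G) p = jac2 F (G p) * jac2 G p := by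
  -- The partial derivatives of a differentiable map are the entries of its Fréchet derivative.
  have key : ∀ (H : ℂ × ℂ → ℂ × ℂ) (q : ℂ × ℂ) (L : ℂ × ℂ →L[ℂ] ℂ × ℂ), HasFDerivAt H L q →
      jac2 H q = !![(L (1, 0)).1, (L (0, 1)).1; (L (1, 0)).2, (L (0, 1)).2] := by
    intro H q L hL
    have h1 : HasDerivAt (fun t => H (t, q.2)) (L (1, 0)) q.1 :=
      HasFDerivAt.comp_hasDerivAt (l := H) (f := fun t => (t, q.2)) q.1 hL
        ((hasDerivAt_id q.1).prodMk (hasDerivAt_const q.1 q.2))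
    have h2 : HasDerivAt (fun t => H (q.1, t)) (L (0, 1)) q.2 :=
      HasFDerivAt.comp_hasDerivAt (l := H) (f := fun t => (q.1, t)) q.2 hL
        ((hasDerivAt_const q.2 q.1).prodMk (hasDerivAt_id q.2))
    have fst : ∀ {g : ℂ → ℂ × ℂ} {v : ℂ × ℂ} {s : ℂ}, HasDerivAt g v s →
        deriv (fun t => (g t).1) s = v.1 := fun {g v s} h =>
      ((ContinuousLinearMap.fst ℂ ℂ ℂ).hasFDerivAt.comp_hasDerivAt s h).deriv
    have snd : ∀ {g : ℂ → ℂ × ℂ} {v : ℂ × ℂ} {s : ℂ}, HasDerivAt g v s →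
        deriv (fun t => (g t).2) s = v.2 := fun {g v s} h =>
      ((ContinuousLinearMap.snd ℂ ℂ ℂ).hasFDerivAt.comp_hasDerivAt s h).deriv
    rw [jac2, fst h1, fst h2, snd h1, snd h2]
  rw [key _ _ _ (hF.hasFDerivAt.comp p hG.hasFDerivAt), key _ _ _ hF.hasFDerivAt,
    key _ _ _ hG.hasFDerivAt]
  have dec : ∀ (L : ℂ × ℂ →L[ℂ] ℂ × ℂ) (v : ℂ × ℂ),
      L v = v.1 • L (1, 0) + v.2 • L (0, 1) := by
    intro L v
    rw [← map_smul, ← map_smul, ← map_add]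
    simp
  simp only [ContinuousLinearMap.comp_apply]
  rw [dec (fderiv ℂ F (G p)) (fderiv ℂ G p (1, 0)), dec (fderiv ℂ F (G p)) (fderiv ℂ G p (0, 1))]
  ext i j
  fin_cases i <;> fin_cases j <;> simp [Matrix.mul_apply, Fin.sum_univ_two] <;> ring

/-- Anti-invariance in one variable: for quadratics `q`, `q'` with `m = q x / q' x`, so that `x` is
a root of `q - m q'`, the Vieta switch to the other root has derivative `-q'(x̃)/q'(x)`. -/
lemma hasDerivAt_switch_s12 (α β γ α' β' γ' : ℂ) (q q' h : ℂ → ℂ)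
    (hq : ∀ t, q t = α * t ^ 2 + β * t + γ) (hq' : ∀ t, q' t = α' * t ^ 2 + β' * t + γ')
    (hh : ∀ t, h t = -t - (β - q t / q' t * β') / (α - q t / q' t * α')) (x : ℂ)
    (hx : q' x ≠ 0) (ha : α - q x / q' x * α' ≠ 0) :
    HasDerivAt h (-(q' (h x) / q' x)) x := by
  -- The coefficients of the Möbius form `-(Q t + R) / (P t + Q)` of `h`.
  obtain ⟨P, hP⟩ : ∃ P, P = α * β' - α' * β := ⟨_, rfl⟩
  obtain ⟨Q, hQ⟩ : ∃ Q, Q = α * γ' - α' * γ := ⟨_, rfl⟩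
  obtain ⟨R, hR⟩ : ∃ R, R = β * γ' - β' * γ := ⟨_, rfl⟩
  have den : ∀ t, q' t ≠ 0 → α - q t / q' t * α' = (P * t + Q) / q' t := by
    intro t ht
    rw [eq_div_iff ht, sub_mul, mul_right_comm, div_mul_cancel₀ _ ht, hq, hq', hP, hQ]
    ring
  have num : ∀ t, q' t ≠ 0 → β - q t / q' t * β' = (R - P * t ^ 2) / q' t := by
    intro t ht
    rw [eq_div_iff ht, sub_mul, mul_right_comm, div_mul_cancel₀ _ ht, hq, hq', hP, hR]
    ring
  have hd : P * x + Q ≠ 0 := by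
    intro h0
    rw [den x hx, h0, zero_div] at ha
    exact ha rfl
  have mob : ∀ t, q' t ≠ 0 → P * t + Q ≠ 0 → h t = -(Q * t + R) / (P * t + Q) := by
    intro t ht hdt
    rw [hh, den t ht, num t ht, div_div_div_cancel_right₀ ht]
    rw [eq_div_iff hdt, sub_mul, div_mul_cancel₀ _ hdt]
    ring
  have cq' : Continuous q' := by
    rw [funext hq']
    fun_prop
  have ev : h =ᶠ[nhds x] fun t => -(Q * t + R) / (P * t + Q) := by
    have cd : Continuous fun t : ℂ => P * t + Q := by fun_prop
    filter_upwards [cq'.continuousAt.eventually_ne hx, cd.continuousAt.eventually_ne hd]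
      with t h1 h2 using mob t h1 h2
  have lin : ∀ A B : ℂ, HasDerivAt (fun t : ℂ => A * t + B) A x := by
    intro A B
    simpa using ((hasDerivAt_id x).const_mul A).add_const B
  refine HasDerivAt.congr_of_eventuallyEq ?_ ev
  refine (HasDerivAt.fun_div (HasDerivAt.fun_neg (lin Q R)) (lin P Q) hd).congr_deriv ?_
  have syz : α' * R - β' * Q + γ' * P = 0 := by
    rw [hP, hQ, hR]
    ring
  have hB : q' (h x) * (P * x + Q) ^ 2 = (Q ^ 2 - P * R) * q' x := by
    have hw : h x * (P * x + Q) = -(Q * x + R) := by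
      rw [mob x hx hd, div_mul_cancel₀ _ hd]
    rw [hq', hq']
    linear_combination (α' * (h x * (P * x + Q) - (Q * x + R)) + β' * (P * x + Q)) * hw
      + (P * x ^ 2 + 2 * Q * x + R) * syz
  rw [← neg_div, div_eq_div_iff (pow_ne_zero 2 hd) hx]
  linear_combination hB

/-- Proposition 1 of the paper: the QRT map `f = i₁ ∘ i₂` built from the pencil of
biquadratics `C_μ = C₀ − μC∞` preserves the area form `dx∧dy/B∞(x,y)`: under the stated
nondegeneracy assumptions, `det Df(p) = B∞(f(p))/B∞(p)`. -/
theorem stmt12 (C0 Cinf : Matrix (Fin 3) (Fin 3) ℂ)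
    (B0 Binf : ℂ → ℂ → ℂ)
    (hB0 : ∀ x y, B0 x y = ![x ^ 2, x, 1] ⬝ᵥ (C0 *ᵥ ![y ^ 2, y, 1]))
    (hBinf : ∀ x y, Binf x y = ![x ^ 2, x, 1] ⬝ᵥ (Cinf *ᵥ ![y ^ 2, y, 1]))
    (μ : ℂ → ℂ → ℂ) (hμ : ∀ x y, μ x y = B0 x y / Binf x y)
    (C : ℂ → ℂ → Matrix (Fin 3) (Fin 3) ℂ)
    (hC : ∀ x y, C x y = C0 - μ x y • Cinf)
    (a₁ b₁ a₂ b₂ : ℂ → ℂ → ℂ)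
    (ha₁ : ∀ x y, a₁ x y = ![x ^ 2, x, 1] ⬝ᵥ (C x y *ᵥ ![1, 0, 0]))
    (hb₁ : ∀ x y, b₁ x y = ![x ^ 2, x, 1] ⬝ᵥ (C x y *ᵥ ![0, 1, 0]))
    (ha₂ : ∀ x y, a₂ x y = ![1, 0, 0] ⬝ᵥ (C x y *ᵥ ![y ^ 2, y, 1]))
    (hb₂ : ∀ x y, b₂ x y = ![0, 1, 0] ⬝ᵥ (C x y *ᵥ ![y ^ 2, y, 1]))
    (i₁ i₂ : ℂ × ℂ → ℂ × ℂ)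
    (hi₁ : ∀ x y, i₁ (x, y) = (x, -y - b₁ x y / a₁ x y))
    (hi₂ : ∀ x y, i₂ (x, y) = (-x - b₂ x y / a₂ x y, y))
    (f : ℂ × ℂ → ℂ × ℂ) (hf : f = i₁ ∘ i₂)
    (x₀ y₀ : ℂ)
    (hB1 : Binf x₀ y₀ ≠ 0)
    (hB2 : Binf (i₂ (x₀, y₀)).1 (i₂ (x₀, y₀)).2 ≠ 0)
    (hB3 : Binf (f (x₀, y₀)).1 (f (x₀, y₀)).2 ≠ 0)
    (ha2 : a₂ x₀ y₀ ≠ 0)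
    (ha1 : a₁ (i₂ (x₀, y₀)).1 (i₂ (x₀, y₀)).2 ≠ 0)
    (hd2 : ![2 * (i₂ (x₀, y₀)).1, 1, 0] ⬝ᵥ (C x₀ y₀ *ᵥ ![y₀ ^ 2, y₀, 1]) ≠ 0)
    (hd1 : ![(i₂ (x₀, y₀)).1 ^ 2, (i₂ (x₀, y₀)).1, 1] ⬝ᵥ
        (C (i₂ (x₀, y₀)).1 (i₂ (x₀, y₀)).2 *ᵥ ![2 * (f (x₀, y₀)).2, 1, 0]) ≠ 0) :
    (jac2 f (x₀, y₀)).det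
      = Binf (f (x₀, y₀)).1 (f (x₀, y₀)).2 / Binf x₀ y₀ := by
  obtain ⟨X, hX⟩ : ∃ X, X = (i₂ (x₀, y₀)).1 := ⟨_, rfl⟩
  have hi2 : i₂ (x₀, y₀) = (X, y₀) := by
    rw [hX, hi₂]
  have hfp : f (x₀, y₀) = i₁ (X, y₀) := by
    rw [hf, Function.comp_apply, hi2]
  obtain ⟨Y, hY⟩ : ∃ Y, Y = (i₁ (X, y₀)).2 := ⟨_, rfl⟩
  have hi1 : i₁ (X, y₀) = (X, Y) := by
    rw [hY, hi₁]
  clear hd1 hd2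
  rw [hi2] at hB2 ha1
  rw [hfp, hi1] at hB3 ⊢
  simp only [] at hB2 ha1 hB3 ⊢
  have eB0 : B0 = fun x y => ![x ^ 2, x, 1] ⬝ᵥ (C0 *ᵥ ![y ^ 2, y, 1]) := by
    funext x y
    exact hB0 x y
  have eBinf : Binf = fun x y => ![x ^ 2, x, 1] ⬝ᵥ (Cinf *ᵥ ![y ^ 2, y, 1]) := by
    funext x y
    exact hBinf x y
  have dB0 : Differentiable ℂ fun p : ℂ × ℂ => B0 p.1 p.2 := by
    rw [eB0]
    simp only [Matrix.mulVec, dotProduct, Fin.sum_univ_three, Matrix.cons_val]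
    fun_prop
  have dBinf : Differentiable ℂ fun p : ℂ × ℂ => Binf p.1 p.2 := by
    rw [eBinf]
    simp only [Matrix.mulVec, dotProduct, Fin.sum_univ_three, Matrix.cons_val]
    fun_prop
  have dμ : ∀ p : ℂ × ℂ, Binf p.1 p.2 ≠ 0 → DifferentiableAt ℂ (fun p => μ p.1 p.2) p := by
    intro p hp
    simp only [hμ]
    exact differentiableAt_div_pair (dB0 p) (dBinf p) hp
  have dC : ∀ p : ℂ × ℂ, Binf p.1 p.2 ≠ 0 → ∀ i j,
      DifferentiableAt ℂ (fun p => C p.1 p.2 i j) p := by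
    intro p hp i j
    simp only [hC, Matrix.sub_apply, Matrix.smul_apply, smul_eq_mul]
    exact ((dμ p hp).mul_const _).const_sub _
  have di₂ : DifferentiableAt ℂ i₂ (x₀, y₀) := by
    have e : i₂ = fun p => (-p.1 - b₂ p.1 p.2 / a₂ p.1 p.2, p.2) := by
      funext p
      exact hi₂ p.1 p.2
    have := dC (x₀, y₀) hB1
    have da : DifferentiableAt ℂ (fun p : ℂ × ℂ => a₂ p.1 p.2) (x₀, y₀) := by
      simp only [ha₂, Matrix.mulVec, dotProduct, Fin.sum_univ_three, Matrix.cons_val]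
      fun_prop
    have db : DifferentiableAt ℂ (fun p : ℂ × ℂ => b₂ p.1 p.2) (x₀, y₀) := by
      simp only [hb₂, Matrix.mulVec, dotProduct, Fin.sum_univ_three, Matrix.cons_val]
      fun_prop
    rw [e]
    exact DifferentiableAt.prodMk (DifferentiableAt.fun_sub differentiableAt_fst.neg
      (differentiableAt_div_pair db da ha2)) differentiableAt_snd
  have di₁ : DifferentiableAt ℂ i₁ (X, y₀) := by
    have e : i₁ = fun p => (p.1, -p.2 - b₁ p.1 p.2 / a₁ p.1 p.2) := by
      funext p
      exact hi₁ p.1 p.2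
    have := dC (X, y₀) hB2
    have da : DifferentiableAt ℂ (fun p : ℂ × ℂ => a₁ p.1 p.2) (X, y₀) := by
      simp only [ha₁, Matrix.mulVec, dotProduct, Fin.sum_univ_three, Matrix.cons_val]
      fun_prop
    have db : DifferentiableAt ℂ (fun p : ℂ × ℂ => b₁ p.1 p.2) (X, y₀) := by
      simp only [hb₁, Matrix.mulVec, dotProduct, Fin.sum_univ_three, Matrix.cons_val]
      fun_prop
    rw [e]
    exact DifferentiableAt.prodMk differentiableAt_fst
      (DifferentiableAt.fun_sub differentiableAt_snd.neg (differentiableAt_div_pair db da ha1))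
  have det₂ : (jac2 i₂ (x₀, y₀)).det = -(Binf X y₀ / Binf x₀ y₀) := by
    have ea : ∀ t, a₂ t y₀ = (C0 *ᵥ ![y₀ ^ 2, y₀, 1]) 0
        - B0 t y₀ / Binf t y₀ * (Cinf *ᵥ ![y₀ ^ 2, y₀, 1]) 0 := by
      intro t
      rw [ha₂, hC, hμ, Matrix.sub_mulVec, Matrix.smul_mulVec,
        dotProduct_three]
      simp
    have eb : ∀ t, b₂ t y₀ = (C0 *ᵥ ![y₀ ^ 2, y₀, 1]) 1
        - B0 t y₀ / Binf t y₀ * (Cinf *ᵥ ![y₀ ^ 2, y₀, 1]) 1 := by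
      intro t
      rw [hb₂, hC, hμ, Matrix.sub_mulVec, Matrix.smul_mulVec,
        dotProduct_three]
      simp
    have hs := hasDerivAt_switch_s12 ((C0 *ᵥ ![y₀ ^ 2, y₀, 1]) 0) ((C0 *ᵥ ![y₀ ^ 2, y₀, 1]) 1) ((C0 *ᵥ ![y₀ ^ 2, y₀, 1]) 2)
      ((Cinf *ᵥ ![y₀ ^ 2, y₀, 1]) 0) ((Cinf *ᵥ ![y₀ ^ 2, y₀, 1]) 1) ((Cinf *ᵥ ![y₀ ^ 2, y₀, 1]) 2)
      (fun t => B0 t y₀) (fun t => Binf t y₀)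
      (fun t => (i₂ (t, y₀)).1)
      (fun t => by
        simp only [hB0, dotProduct_three]
        ring)
      (fun t => by
        simp only [hBinf, dotProduct_three]
        ring)
      (fun t => by simp only [hi₂, ← ea, ← eb]) x₀ hB1 (by rw [← ea]; exact ha2)
    have hs' := hs.deriv
    rw [← hX] at hs'
    rw [jac2, Matrix.det_fin_two_of, hs']
    simp [hi₂]
  have det₁ : (jac2 i₁ (X, y₀)).det = -(Binf X Y / Binf X y₀) := by
    have ea : ∀ t, a₁ X t = (![X ^ 2, X, 1] ᵥ* C0) 0
        - B0 X t / Binf X t * (![X ^ 2, X, 1] ᵥ* Cinf) 0 := by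
      intro t
      rw [ha₁, hC, hμ, Matrix.dotProduct_mulVec, Matrix.vecMul_sub, Matrix.vecMul_smul,
        dotProduct_three']
      simp
    have eb : ∀ t, b₁ X t = (![X ^ 2, X, 1] ᵥ* C0) 1
        - B0 X t / Binf X t * (![X ^ 2, X, 1] ᵥ* Cinf) 1 := by
      intro t
      rw [hb₁, hC, hμ, Matrix.dotProduct_mulVec, Matrix.vecMul_sub, Matrix.vecMul_smul,
        dotProduct_three']
      simp
    have hs := hasDerivAt_switch_s12 ((![X ^ 2, X, 1] ᵥ* C0) 0) ((![X ^ 2, X, 1] ᵥ* C0) 1) ((![X ^ 2, X, 1] ᵥ* C0) 2)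
      ((![X ^ 2, X, 1] ᵥ* Cinf) 0) ((![X ^ 2, X, 1] ᵥ* Cinf) 1) ((![X ^ 2, X, 1] ᵥ* Cinf) 2)
      (fun t => B0 X t) (fun t => Binf X t)
      (fun t => (i₁ (X, t)).2)
      (fun t => by
        simp only [hB0, Matrix.dotProduct_mulVec, dotProduct_three']
        ring)
      (fun t => by
        simp only [hBinf, Matrix.dotProduct_mulVec, dotProduct_three']
        ring)
      (fun t => by simp only [hi₁, ← ea, ← eb]) y₀ hB2 (by rw [← ea]; exact ha1)
    have hs' := hs.deriv
    rw [← hY] at hs'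
    rw [jac2, Matrix.det_fin_two_of, hs']
    simp [hi₁]
  rw [hf, jac2_comp (by rwa [hi2]) di₂, Matrix.det_mul, hi2, det₁, det₂, neg_mul_neg,
    div_mul_div_cancel₀ hB2]
end

section
/- Let C₀, C∞ be 3×3 complex matrices. Define B₀(x,y) := (x², x, 1)·C₀·(y², y, 1)ᵀ, B∞(x,y) := (x², x, 1)·C∞·(y², y, 1)ᵀ, and on the set where B∞ ≠ 0 define μ(x,y) := B₀(x,y)/B∞(x,y) and C(x,y) := C₀ − μ(x,y)·C∞. Define the vertical switch i₁(x,y) := (x, ỹ) with ỹ := −y − b/a, a := (x², x, 1)·C(x,y)·(1,0,0)ᵀ, b := (x², x, 1)·C(x,y)·(0,1,0)ᵀ. If (x₀,y₀) satisfies B∞(x₀,y₀) ≠ 0, a(x₀,y₀) ≠ 0, and B∞(i₁(x₀,y₀)) ≠ 0, then μ(i₁(x₀,y₀)) = μ(x₀,y₀). -/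
open Matrix

/-!
For fixed `x₀` and the fixed parameter `m = μ x₀ y₀`, the polynomial `y ↦ B₀ - m B∞` is a quadratic
with leading coefficients `a`, `b`, and it vanishes at `y₀`. The vertical switch sends `y₀` to the
other root given by Vieta's formula, so `B₀ = m B∞` also holds at the image point; dividing by
`B∞ ≠ 0` there gives the invariance.
-/

/-- The pencil parameter `μ = B₀/B∞` is an integral of motion of the QRT vertical switch:
if `B∞ ≠ 0` at `(x₀,y₀)`, the leading coefficient `a ≠ 0` there, and `B∞ ≠ 0` at
`i₁(x₀,y₀)`, then `μ(i₁(x₀,y₀)) = μ(x₀,y₀)`. -/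
theorem stmt13 (C0 Cinf : Matrix (Fin 3) (Fin 3) ℂ)
    (B0 Binf : ℂ → ℂ → ℂ)
    (hB0 : ∀ x y, B0 x y = ![x ^ 2, x, 1] ⬝ᵥ (C0 *ᵥ ![y ^ 2, y, 1]))
    (hBinf : ∀ x y, Binf x y = ![x ^ 2, x, 1] ⬝ᵥ (Cinf *ᵥ ![y ^ 2, y, 1]))
    (μ : ℂ → ℂ → ℂ) (hμ : ∀ x y, μ x y = B0 x y / Binf x y)
    (C : ℂ → ℂ → Matrix (Fin 3) (Fin 3) ℂ)
    (hC : ∀ x y, C x y = C0 - μ x y • Cinf)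
    (a b : ℂ → ℂ → ℂ)
    (ha : ∀ x y, a x y = ![x ^ 2, x, 1] ⬝ᵥ (C x y *ᵥ ![1, 0, 0]))
    (hb : ∀ x y, b x y = ![x ^ 2, x, 1] ⬝ᵥ (C x y *ᵥ ![0, 1, 0]))
    (i₁ : ℂ × ℂ → ℂ × ℂ)
    (hi₁ : ∀ x y, i₁ (x, y) = (x, -y - b x y / a x y))
    (x₀ y₀ : ℂ)
    (h1 : Binf x₀ y₀ ≠ 0)
    (h2 : a x₀ y₀ ≠ 0)
    (h3 : Binf (i₁ (x₀, y₀)).1 (i₁ (x₀, y₀)).2 ≠ 0) :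
    μ (i₁ (x₀, y₀)).1 (i₁ (x₀, y₀)).2 = μ x₀ y₀ := by
  set m := μ x₀ y₀ with hm
  set α := a x₀ y₀ with hα
  set β := b x₀ y₀ with hβ
  -- With `m` frozen, the pencil member is the quadratic `α y² + β y + γ` in `y`.
  obtain ⟨γ, hγ⟩ : ∃ γ, ∀ y, B0 x₀ y - m * Binf x₀ y = α * y ^ 2 + β * y + γ := by
    refine ⟨![x₀ ^ 2, x₀, 1] ⬝ᵥ (C x₀ y₀ *ᵥ ![0, 0, 1]), fun y => ?_⟩
    rw [hB0, hBinf, hα, hβ, ha, hb, hC, ← hm]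
    simp [Matrix.mulVec, dotProduct, Fin.sum_univ_three]
    ring
  have h_start : B0 x₀ y₀ - m * Binf x₀ y₀ = 0 := by
    rw [hm, hμ, div_mul_cancel₀ _ h1, sub_self]
  rw [hi₁] at h3 ⊢
  simp only [← hα, ← hβ] at h3 ⊢
  -- `y₀` and its image sum to `-β / α`, so the quadratic takes equal values at both.
  have h_image : B0 x₀ (-y₀ - β / α) - m * Binf x₀ (-y₀ - β / α) = 0 := by
    rw [← h_start, hγ, hγ]
    field_simp
    ring
  rw [hμ, div_eq_iff h3]
  exact sub_eq_zero.mp h_image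
end

section
/- For ν ∈ ℂ with ν ≠ 0, let λ := (ν² − 1)/2, let M_λ be the 4×4 complex matrix with rows (−λ, 1+λ, 0, λ), (1+λ, −λ, 0, λ), (0, 0, 0, −1), (λ, λ, −1, 0), and let A_ν be the 4×4 complex matrix with rows ((ν+1)/(2ν), (ν−1)/(2ν), 0, 0), ((ν−1)/(2ν), (ν+1)/(2ν), 0, 0), ((ν²−1)/2, (ν²−1)/2, 1, 0), (0, 0, 0, 1). Then A_νᵀ · M_λ · A_ν = M₀. -/
open Matrix

/-- Example 2 of the paper (pencil through a cuspidal quartic curve): with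
`λ = (ν² − 1)/2`, the matrix `A_ν` normalizes `M_λ`, i.e. `A_νᵀ·M_λ·A_ν = M₀`. -/
theorem stmt16 (ν : ℂ) (hν : ν ≠ 0) (l : ℂ) (hl : l = (ν ^ 2 - 1) / 2) :
    (!![(ν + 1) / (2 * ν), (ν - 1) / (2 * ν), 0, 0;
        (ν - 1) / (2 * ν), (ν + 1) / (2 * ν), 0, 0;
        (ν ^ 2 - 1) / 2, (ν ^ 2 - 1) / 2, 1, 0;
        0, 0, 0, 1])ᵀ *
      !![-l, 1 + l, 0, l; 1 + l, -l, 0, l; 0, 0, 0, -1; l, l, -1, 0] *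
      !![(ν + 1) / (2 * ν), (ν - 1) / (2 * ν), 0, 0;
        (ν - 1) / (2 * ν), (ν + 1) / (2 * ν), 0, 0;
        (ν ^ 2 - 1) / 2, (ν ^ 2 - 1) / 2, 1, 0;
        0, 0, 0, 1] = M0 := by
  -- On the span of the first two coordinates, `(1, 1)` and `(1, -1)` are eigenvectors of the top
  -- left blocks: `M_λ` has eigenvalues `1` and `-(1 + 2λ) = -ν²`, and `A_ν` has `1` and `1 / ν`, so
  -- that the block of the product has `1` and `-1`. The third row of `A_ν` cancels the entries `λ`.
  subst hl
  ext i j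
  fin_cases i <;> fin_cases j <;>
    simp [M0, Matrix.mul_apply, Fin.sum_univ_four] <;> field_simp <;> ring
end

section
/- For ν ∈ ℂ with ν ≠ 0, consider the holomorphic map (x, y, ν) ↦ ( ((ν+1)x + (ν−1)y)/(2ν), ((ν−1)x + (ν+1)y)/(2ν), xy + ((ν²−1)/2)(x+y) ). The determinant of its 3×3 complex Jacobian matrix at (x, y, ν) equals (x + y) − (x − y)²/(2ν²). Equivalently, writing (x₁, x₂, x₃) for the components of the image, the Jacobian determinant equals (x₁ + x₂) − ½(x₁ − x₂)², i.e. −Q∞(x₁, x₂, x₃, 1) where Q∞(X) = ½(X₁ − X₂)² − (X₁ + X₂)X₄. -/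
/-!
In each of `x` and `y` separately the map is affine, so those partial derivatives are the leading
coefficients. The first two components equal `(x + y) / 2 ± (x - y) / (2 * ν)`; hence their
`ν`-derivatives are `∓(x - y) / (2 * ν ^ 2)`, their sum is `x + y` and their difference is
`(x - y) / ν`. The determinant formula and the two rewritings are then rational identities.
-/

open Matrix

theorem deriv_affine (a b z : ℂ) : deriv (fun t => a * t + b) z = a := by
  simp

theorem deriv_component (a b ν : ℂ) (hν : ν ≠ 0) :
    deriv (fun t => ((t + 1) * a + (t - 1) * b) / (2 * t)) ν = -(a - b) / (2 * ν ^ 2) := by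
  have hn : HasDerivAt (fun t : ℂ => (t + 1) * a + (t - 1) * b) (1 * a + 1 * b) ν :=
    (((hasDerivAt_id ν).add_const 1).mul_const a).add (((hasDerivAt_id ν).sub_const 1).mul_const b)
  have hd : HasDerivAt (fun t : ℂ => 2 * t) (2 * 1) ν := (hasDerivAt_id ν).const_mul 2
  rw [(hn.fun_div hd (mul_ne_zero two_ne_zero hν)).deriv]
  field_simp
  ring

theorem deriv_third (x y ν : ℂ) :
    deriv (fun t => x * y + ((t ^ 2 - 1) / 2) * (x + y)) ν = ν * (x + y) := by
  have h : HasDerivAt (fun t : ℂ => x * y + ((t ^ 2 - 1) / 2) * (x + y))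
      (((2 : ℕ) * ν ^ (2 - 1)) / 2 * (x + y)) ν :=
    ((((hasDerivAt_pow 2 ν).sub_const 1).div_const 2).mul_const (x + y)).const_add (x * y)
  rw [h.deriv]
  push_cast
  ring

/-- Example 2 of the paper: for `ν ≠ 0`, the pencil-adapted parametrization
`(x, y, ν) ↦ (((ν+1)x + (ν−1)y)/(2ν), ((ν−1)x + (ν+1)y)/(2ν), xy + ((ν²−1)/2)(x+y))`
has Jacobian determinant `(x+y) − (x−y)²/(2ν²) = (x₁+x₂) − ½(x₁−x₂)² = −Q∞(x₁,x₂,x₃,1)`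
with `Q∞(X) = ½(X₁−X₂)² − (X₁+X₂)X₄`. -/
theorem stmt17 (x y ν : ℂ) (hν : ν ≠ 0)
    (F : ℂ → ℂ → ℂ → Fin 3 → ℂ)
    (hF : ∀ x y ν, F x y ν =
      ![((ν + 1) * x + (ν - 1) * y) / (2 * ν),
        ((ν - 1) * x + (ν + 1) * y) / (2 * ν),
        x * y + ((ν ^ 2 - 1) / 2) * (x + y)]) :
    Matrix.det (Matrix.of fun (i : Fin 3) (j : Fin 3) =>
        ![deriv (fun t => F t y ν i) x,
          deriv (fun t => F x t ν i) y,
          deriv (fun t => F x y t i) ν] j)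
      = (x + y) - (x - y) ^ 2 / (2 * ν ^ 2) ∧
    (x + y) - (x - y) ^ 2 / (2 * ν ^ 2)
      = (F x y ν 0 + F x y ν 1) - (1 / 2) * (F x y ν 0 - F x y ν 1) ^ 2 ∧
    (F x y ν 0 + F x y ν 1) - (1 / 2) * (F x y ν 0 - F x y ν 1) ^ 2
      = -((1 / 2) * (F x y ν 0 - F x y ν 1) ^ 2 - (F x y ν 0 + F x y ν 1) * 1) := by
  have h00 : deriv (fun t : ℂ => ((ν + 1) * t + (ν - 1) * y) / (2 * ν)) x = (ν + 1) / (2 * ν) := by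
    rw [← deriv_affine ((ν + 1) / (2 * ν)) ((ν - 1) / (2 * ν) * y) x]
    congr 1
    funext t
    ring
  have h01 : deriv (fun t : ℂ => ((ν + 1) * x + (ν - 1) * t) / (2 * ν)) y = (ν - 1) / (2 * ν) := by
    rw [← deriv_affine ((ν - 1) / (2 * ν)) ((ν + 1) / (2 * ν) * x) y]
    congr 1
    funext t
    ring
  have h10 : deriv (fun t : ℂ => ((ν - 1) * t + (ν + 1) * y) / (2 * ν)) x = (ν - 1) / (2 * ν) := by
    rw [← deriv_affine ((ν - 1) / (2 * ν)) ((ν + 1) / (2 * ν) * y) x]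
    congr 1
    funext t
    ring
  have h11 : deriv (fun t : ℂ => ((ν - 1) * x + (ν + 1) * t) / (2 * ν)) y = (ν + 1) / (2 * ν) := by
    rw [← deriv_affine ((ν + 1) / (2 * ν)) ((ν - 1) / (2 * ν) * x) y]
    congr 1
    funext t
    ring
  have h20 : deriv (fun t : ℂ => t * y + ((ν ^ 2 - 1) / 2) * (t + y)) x = y + (ν ^ 2 - 1) / 2 := by
    rw [← deriv_affine (y + (ν ^ 2 - 1) / 2) ((ν ^ 2 - 1) / 2 * y) x]
    congr 1
    funext t
    ring
  have h21 : deriv (fun t : ℂ => x * t + ((ν ^ 2 - 1) / 2) * (x + t)) y = x + (ν ^ 2 - 1) / 2 := by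
    rw [← deriv_affine (x + (ν ^ 2 - 1) / 2) ((ν ^ 2 - 1) / 2 * x) y]
    congr 1
    funext t
    ring
  have h02 := deriv_component x y ν hν
  -- The second component is the first one with `x` and `y` exchanged.
  have h12 : deriv (fun t : ℂ => ((t - 1) * x + (t + 1) * y) / (2 * t)) ν
      = -(y - x) / (2 * ν ^ 2) := by
    rw [← deriv_component y x ν hν]
    congr 1
    funext t
    rw [add_comm]
  have h22 := deriv_third x y ν
  refine ⟨?_, ?_, by ring⟩
  · simp only [Matrix.det_fin_three, Matrix.of_apply, hF, Matrix.cons_val]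
    rw [h00, h01, h02, h10, h11, h12, h20, h21, h22]
    field_simp
    ring
  · simp only [hF, Matrix.cons_val]
    field_simp
    ring
end
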